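/- arXiv:1003.2170 — 6 statements merged into one kernel-verified Lean document; each statement's English description precedes it below -/
import Mathlib

section
/- The double integral over the unit square ∫₀¹ ∫₀¹ 1/(1 − x·y) dx dy equals ∑_{n=1}^∞ 1/n². -/
/-!
Expanding `1 / (1 - x * y)` as a geometric series and integrating in `x` gives
`∑ yⁿ / (n + 1)` for `|y| < 1`; integrating this power series in `y` divides the `n`-th
coefficient by `n + 1` once more. Both integrations are termwise because the integrals of the norms
of the terms are summable. For the second one the interval of integration reaches the boundary of
the disc of convergence, where uniform convergence is not available.
-/

open Set MeasureTheory
open scoped Interval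

section TermwiseIntegration

variable {E : Type*} [NormedAddCommGroup E] [NormedSpace ℝ E]

theorem hasSum_intervalIntegral_of_summable_integral_norm {ι : Type*} [Countable ι]
    {μ : Measure ℝ} {a b : ℝ} {F : ι → ℝ → E} (hF : ∀ i, IntervalIntegrable (F i) μ a b)
    (hsum : Summable fun i ↦ ∫ x in Ι a b, ‖F i x‖ ∂μ) :
    HasSum (fun i ↦ ∫ x in a..b, F i x ∂μ) (∫ x in a..b, ∑' i, F i x ∂μ) := by
  simp only [intervalIntegral.intervalIntegral_eq_integral_uIoc]
  exact (hasSum_integral_of_summable_integral_norm (fun i ↦ (hF i).def') hsum).const_smul _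

theorem hasSum_intervalIntegral_pow_smul [CompleteSpace E] {c : ℕ → E} {b : ℝ}
    (hc : Summable fun n : ℕ ↦ |b| ^ (n + 1) / (n + 1) * ‖c n‖) :
    HasSum (fun n : ℕ ↦ (b ^ (n + 1) / (n + 1)) • c n) (∫ x in 0..b, ∑' n, x ^ n • c n) := by
  have integral_norm (n : ℕ) :
      ∫ x in Ι 0 b, ‖x ^ n • c n‖ = |b| ^ (n + 1) / (n + 1) * ‖c n‖ := by
    simpa [norm_smul, integral_mul_const] using
      congrArg (· * ‖c n‖) (integral_pow_abs_sub_uIoc (a := 0) (b := b) n)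
  have integral_term (n : ℕ) : ∫ x in 0..b, x ^ n • c n = (b ^ (n + 1) / (n + 1)) • c n := by
    simp [intervalIntegral.integral_smul_const]
  simpa only [integral_term] using
    hasSum_intervalIntegral_of_summable_integral_norm (μ := volume) (F := fun n x ↦ x ^ n • c n)
      (fun n ↦ (by fun_prop : Continuous fun x : ℝ ↦ x ^ n • c n).intervalIntegrable 0 b)
      (by simpa only [integral_norm] using hc)

end TermwiseIntegration

theorem hasSum_intervalIntegral_one_div_one_sub_mul {b y : ℝ} (h : |b * y| < 1) :
    HasSum (fun n : ℕ ↦ b ^ (n + 1) / (n + 1) * y ^ n) (∫ x in 0..b, 1 / (1 - x * y)) := by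
  have geometric : EqOn (fun x ↦ 1 / (1 - x * y)) (fun x ↦ ∑' n : ℕ, x ^ n • y ^ n) [[0, b]] := by
    intro x hx
    have hxb : |x| ≤ |b| := by simpa using abs_sub_left_of_mem_uIcc hx
    have hxy : |x * y| < 1 := by
      rw [abs_mul] at h ⊢
      exact (mul_le_mul_of_nonneg_right hxb (abs_nonneg y)).trans_lt h
    simp only [smul_eq_mul, ← mul_pow, tsum_geometric_of_abs_lt_one hxy, one_div]
  have summable : Summable fun n : ℕ ↦ |b| ^ (n + 1) / (n + 1) * ‖y ^ n‖ := by
    refine .of_nonneg_of_le (fun n ↦ by positivity) (fun n ↦ ?_)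
      ((summable_geometric_of_lt_one (abs_nonneg (b * y)) h).mul_left |b|)
    calc |b| ^ (n + 1) / (n + 1) * ‖y ^ n‖
        ≤ |b| ^ (n + 1) * ‖y ^ n‖ := by
          gcongr
          exact div_le_self (by positivity) (by simp)
      _ = |b| * |b * y| ^ n := by
          rw [norm_pow, Real.norm_eq_abs, abs_mul]
          ring
  rw [intervalIntegral.integral_congr geometric]
  exact hasSum_intervalIntegral_pow_smul summable

theorem hasSum_intervalIntegral_tsum_pow_div_add_one {b : ℝ} (hb : |b| ≤ 1) :
    HasSum (fun n : ℕ ↦ b ^ (n + 1) / ((n : ℝ) + 1) ^ 2)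
      (∫ y in 0..b, ∑' n : ℕ, y ^ n / ((n : ℝ) + 1)) := by
  have summable_inv_sq : Summable fun n : ℕ ↦ 1 / ((n : ℝ) + 1) ^ 2 := by
    exact_mod_cast (summable_nat_add_iff 1).2 (Real.summable_one_div_nat_pow.2 one_lt_two)
  have summable : Summable fun n : ℕ ↦ |b| ^ (n + 1) / (n + 1) * ‖((n : ℝ) + 1)⁻¹‖ := by
    refine .of_nonneg_of_le (fun n ↦ by positivity) (fun n ↦ ?_) summable_inv_sq
    calc |b| ^ (n + 1) / (n + 1) * ‖((n : ℝ) + 1)⁻¹‖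
        = |b| ^ (n + 1) / ((n : ℝ) + 1) ^ 2 := by
          rw [Real.norm_of_nonneg (by positivity), ← div_eq_mul_inv, div_div, sq]
      _ ≤ 1 / ((n : ℝ) + 1) ^ 2 := by
          gcongr
          exact pow_le_one₀ (abs_nonneg b) hb
  simpa only [smul_eq_mul, ← div_eq_mul_inv, div_div, ← sq] using
    hasSum_intervalIntegral_pow_smul summable

/-- ∫₀¹ ∫₀¹ 1/(1 − x·y) dx dy = ∑_{n=1}^∞ 1/n². -/
theorem beukers_integral_eq_tsum :
    (∫ y in (0:ℝ)..1, ∫ x in (0:ℝ)..1, 1 / (1 - x * y)) =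
      ∑' n : ℕ, (1 : ℝ) / ((n : ℝ) + 1) ^ 2 := by
  have inner : EqOn (fun y : ℝ ↦ ∫ x in (0:ℝ)..1, 1 / (1 - x * y))
      (fun y ↦ ∑' n : ℕ, y ^ n / ((n : ℝ) + 1)) (Ioo 0 1) := by
    intro y hy
    have hy_abs : |1 * y| < 1 := by rw [one_mul, abs_of_pos hy.1]; exact hy.2
    simpa only [one_pow, one_div_mul_eq_div] using
      (hasSum_intervalIntegral_one_div_one_sub_mul hy_abs).tsum_eq.symm
  have outer := hasSum_intervalIntegral_tsum_pow_div_add_one (abs_one (α := ℝ)).le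
  calc (∫ y in (0:ℝ)..1, ∫ x in (0:ℝ)..1, 1 / (1 - x * y))
      = ∫ y in (0:ℝ)..1, ∑' n : ℕ, y ^ n / ((n : ℝ) + 1) :=
        intervalIntegral.integral_congr_Ioo_of_le zero_le_one inner
    _ = ∑' n : ℕ, (1 : ℝ) / ((n : ℝ) + 1) ^ 2 := by
        simpa only [one_pow] using outer.tsum_eq.symm
end

section
/- The double integral over the unit square ∫₀¹ ∫₀¹ 1/(1 − x²·y²) dx dy equals ∑_{n=0}^∞ 1/(2n+1)². -/
/-!
Expanding the integrand as the geometric series `∑ (x² y²)ⁿ` and integrating term by term, first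
in `x` and then in `y`, each integration contributes a factor `1 / (2n + 1)`. The corner `(1, 1)`
costs nothing: summability of the `L¹` norms justifies the interchange, so the series need not
converge uniformly up to the endpoint.
-/

open MeasureTheory Set

theorem integral_zero_one_pow (m : ℕ) : ∫ x in (0 : ℝ)..1, x ^ m = ((m : ℝ) + 1)⁻¹ := by
  simp [integral_pow]

section TermwiseIntegration

variable {E : Type*} [NormedAddCommGroup E] [NormedSpace ℝ E]

theorem integral_zero_one_norm_pow_smul (m : ℕ) (v : E) :
    ∫ x in (0 : ℝ)..1, ‖x ^ m • v‖ = ‖v‖ / (m + 1) := by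
  have norm_eq : EqOn (fun x : ℝ ↦ ‖x ^ m • v‖) (fun x ↦ x ^ m * ‖v‖) (uIcc 0 1) := by
    intro x hx
    rw [uIcc_of_le zero_le_one] at hx
    simp only [norm_smul, Real.norm_of_nonneg (pow_nonneg hx.1 m)]
  rw [intervalIntegral.integral_congr norm_eq, intervalIntegral.integral_mul_const,
    integral_zero_one_pow, inv_mul_eq_div]

theorem hasSum_integral_tsum_pow_smul [CompleteSpace E] {ι : Type*} [Countable ι]
    {e : ι → ℕ} {c : ι → E}
    (hc : Summable fun i ↦ ‖c i‖ / (e i + 1)) :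
    HasSum (fun i ↦ ((e i : ℝ) + 1)⁻¹ • c i) (∫ x in (0 : ℝ)..1, ∑' i, x ^ e i • c i) := by
  have term_integrable (i : ι) :
      Integrable (fun x : ℝ ↦ x ^ e i • c i) (volume.restrict (Ioc 0 1)) :=
    Continuous.integrableOn_Ioc (by fun_prop)
  have norms_summable : Summable fun i ↦ ∫ x in Ioc (0 : ℝ) 1, ‖x ^ e i • c i‖ := by
    simpa only [← intervalIntegral.integral_of_le zero_le_one,
      integral_zero_one_norm_pow_smul] using hc
  simpa only [← intervalIntegral.integral_of_le zero_le_one, intervalIntegral.integral_smul_const,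
    integral_zero_one_pow] using
    hasSum_integral_of_summable_integral_norm term_integrable norms_summable

end TermwiseIntegration

theorem hasSum_integral_one_div_one_sub_pow_mul (j : ℕ) {a : ℝ} (ha : |a| < 1) :
    HasSum (fun n : ℕ ↦ a ^ n / (j * n + 1)) (∫ x in (0 : ℝ)..1, 1 / (1 - x ^ j * a)) := by
  have geometric : EqOn (fun x : ℝ ↦ ∑' n : ℕ, x ^ (j * n) • a ^ n)
      (fun x ↦ 1 / (1 - x ^ j * a)) (uIcc 0 1) := by
    intro x hx
    rw [uIcc_of_le zero_le_one] at hx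
    have ratio_lt_one : |x ^ j * a| < 1 := by
      rw [abs_mul, abs_of_nonneg (pow_nonneg hx.1 j)]
      exact mul_lt_one_of_nonneg_of_lt_one_right (pow_le_one₀ hx.1 hx.2) (abs_nonneg a) ha
    simp only [smul_eq_mul, pow_mul, ← mul_pow, tsum_geometric_of_abs_lt_one ratio_lt_one, one_div]
  have coeff_summable : Summable fun n : ℕ ↦ ‖a ^ n‖ / ((j * n : ℕ) + 1) :=
    (summable_geometric_of_lt_one (abs_nonneg a) ha).of_nonneg_of_le (fun n ↦ by positivity)
      fun n ↦ by
        rw [norm_pow, Real.norm_eq_abs]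
        exact div_le_self (by positivity) (le_add_of_nonneg_left (by positivity))
  rw [← intervalIntegral.integral_congr geometric]
  simpa only [smul_eq_mul, inv_mul_eq_div, Nat.cast_mul] using
    hasSum_integral_tsum_pow_smul coeff_summable

theorem summable_one_div_mul_add_one_mul {j k : ℕ} (hj : j ≠ 0) (hk : k ≠ 0) :
    Summable fun n : ℕ ↦ (1 : ℝ) / ((j * n + 1) * (k * n + 1)) := by
  have squares_summable : Summable fun n : ℕ ↦ (1 : ℝ) / ((n + 1 : ℕ) : ℝ) ^ 2 :=
    (summable_nat_add_iff 1).2 (Real.summable_one_div_nat_pow.2 one_lt_two)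
  have le_mul {m : ℕ} (hm : m ≠ 0) (n : ℕ) : (n : ℝ) ≤ m * n := by
    exact_mod_cast Nat.le_mul_of_pos_left n (Nat.pos_of_ne_zero hm)
  refine squares_summable.of_nonneg_of_le (fun n ↦ by positivity) fun n ↦ ?_
  rw [Nat.cast_succ, sq]
  gcongr
  exacts [le_mul hj n, le_mul hk n]

theorem integral_eq_odd_tsum_general {j k : ℕ} (hj : j ≠ 0) (hk : k ≠ 0) :
    HasSum (fun n : ℕ ↦ (1 : ℝ) / ((j * n + 1) * (k * n + 1)))
      (∫ y in (0 : ℝ)..1, ∫ x in (0 : ℝ)..1, 1 / (1 - x ^ j * y ^ k)) := by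
  have inner_integral : EqOn (fun y : ℝ ↦ ∫ x in (0 : ℝ)..1, 1 / (1 - x ^ j * y ^ k))
      (fun y ↦ ∑' n : ℕ, y ^ (k * n) • ((j : ℝ) * n + 1)⁻¹) (Ioo 0 1) := by
    intro y hy
    have pow_lt_one : |y ^ k| < 1 := by
      rw [abs_of_nonneg (pow_nonneg hy.1.le k)]
      exact pow_lt_one₀ hy.1.le hy.2 hk
    simpa only [pow_mul, smul_eq_mul, ← div_eq_mul_inv] using
      (hasSum_integral_one_div_one_sub_pow_mul j pow_lt_one).tsum_eq.symm
  have coeff_eq (n : ℕ) : (1 : ℝ) / ((j * n + 1) * (k * n + 1)) =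
      ((j : ℝ) * n + 1)⁻¹ / ((k * n : ℕ) + 1) := by
    rw [Nat.cast_mul, ← div_div, one_div]
  have coeff_summable : Summable fun n : ℕ ↦ ‖((j : ℝ) * n + 1)⁻¹‖ / ((k * n : ℕ) + 1) := by
    have norm_coeff (n : ℕ) : ‖((j : ℝ) * n + 1)⁻¹‖ = ((j : ℝ) * n + 1)⁻¹ :=
      Real.norm_of_nonneg (by positivity)
    simpa only [norm_coeff, coeff_eq] using summable_one_div_mul_add_one_mul hj hk
  rw [intervalIntegral.integral_congr_Ioo_of_le zero_le_one inner_integral]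
  simpa only [coeff_eq, smul_eq_mul, inv_mul_eq_div] using
    hasSum_integral_tsum_pow_smul coeff_summable

/-- ∫₀¹ ∫₀¹ 1/(1 − x²·y²) dx dy = ∑_{n=0}^∞ 1/(2n+1)². -/
theorem integral_eq_odd_tsum :
    (∫ y in (0:ℝ)..1, ∫ x in (0:ℝ)..1, 1 / (1 - x ^ 2 * y ^ 2)) =
      ∑' n : ℕ, (1 : ℝ) / (2 * (n : ℝ) + 1) ^ 2 := by
  simpa only [← sq, Nat.cast_ofNat] using
    (integral_eq_odd_tsum_general two_ne_zero two_ne_zero).tsum_eq.symm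
end

section
/- The double integral over the unit square ∫₀¹ ∫₀¹ 1/(1 − x²·y²) dx dy equals π²/8. -/
/-! Expand `1 / (1 - x ^ k * y ^ k)` as the geometric series `∑ x ^ (k n) * y ^ (k n)` and integrate
term by term, first in `x` and then in `y`; each integration contributes a factor `1 / (k n + 1)`.
Although the series does not converge uniformly near the corner, the `L¹` norms of its terms are
summable, which is enough. For `k = 2` this leaves the odd part of `ζ(2)`; the even part is
`ζ(2) / 4`. -/

open MeasureTheory Set

lemma hasSum_integral_of_hasSum_pow_smul {ι E : Type*} [Countable ι] [NormedAddCommGroup E]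
    [NormedSpace ℝ E] [CompleteSpace E] {e : ι → ℕ} {c : ι → E} {f : ℝ → E}
    (hc : Summable fun i ↦ 1 / (e i + 1 : ℝ) * ‖c i‖)
    (hf : ∀ x ∈ Ioo (0 : ℝ) 1, HasSum (fun i ↦ x ^ e i • c i) (f x)) :
    HasSum (fun i ↦ (1 / (e i + 1 : ℝ)) • c i) (∫ x in (0 : ℝ)..1, f x) := by
  have integral_Ioo_pow (n : ℕ) : ∫ x in Ioo (0 : ℝ) 1, x ^ n = 1 / (n + 1 : ℝ) := by
    rw [← integral_Ioc_eq_integral_Ioo, ← intervalIntegral.integral_of_le zero_le_one]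
    simp
  have integral_term (i : ι) :
      ∫ x in Ioo (0 : ℝ) 1, x ^ e i • c i = (1 / (e i + 1 : ℝ)) • c i := by
    rw [integral_smul_const, integral_Ioo_pow]
  have integral_norm_term (i : ι) :
      ∫ x in Ioo (0 : ℝ) 1, ‖x ^ e i • c i‖ = 1 / (e i + 1 : ℝ) * ‖c i‖ := by
    rw [← integral_Ioo_pow, ← integral_mul_const]
    refine setIntegral_congr_fun measurableSet_Ioo fun x hx ↦ ?_
    rw [norm_smul, Real.norm_of_nonneg (pow_nonneg hx.1.le _)]
  have integrable_term (i : ι) : IntegrableOn (fun x : ℝ ↦ x ^ e i • c i) (Ioo 0 1) :=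
    (Continuous.integrableOn_Icc (by fun_prop)).mono_set Ioo_subset_Icc_self
  have integral_eq_tsum :
      ∫ x in (0 : ℝ)..1, f x = ∫ x in Ioo (0 : ℝ) 1, ∑' i, x ^ e i • c i := by
    rw [intervalIntegral.integral_of_le zero_le_one, integral_Ioc_eq_integral_Ioo]
    exact setIntegral_congr_fun measurableSet_Ioo fun x hx ↦ (hf x hx).tsum_eq.symm
  rw [integral_eq_tsum]
  simpa only [integral_term] using
    hasSum_integral_of_summable_integral_norm integrable_term (by simpa only [integral_norm_term])

lemma hasSum_one_div_one_sub_pow_mul_pow {k : ℕ} (hk : k ≠ 0) {x y : ℝ} (h : |x * y| < 1) :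
    HasSum (fun n ↦ x ^ (k * n) * y ^ (k * n)) (1 / (1 - x ^ k * y ^ k)) := by
  have abs_pow_lt_one : |x ^ k * y ^ k| < 1 := by
    rw [← mul_pow, abs_pow]
    exact pow_lt_one₀ (abs_nonneg _) h hk
  simpa only [one_div, mul_pow, ← pow_mul] using hasSum_geometric_of_abs_lt_one abs_pow_lt_one

lemma summable_one_div_add_one_mul_pow {r : ℝ} (hr : |r| < 1) :
    Summable fun n : ℕ ↦ 1 / (n + 1 : ℝ) * r ^ n := by
  refine (summable_geometric_of_lt_one (abs_nonneg r) hr).of_norm_bounded fun n ↦ ?_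
  rw [norm_mul, norm_pow, Real.norm_eq_abs r, Real.norm_of_nonneg (by positivity)]
  refine mul_le_of_le_one_left (by positivity) ((div_le_one (by positivity)).2 ?_)
  exact le_add_of_nonneg_left n.cast_nonneg

lemma hasSum_integral_one_div_one_sub_pow_mul_pow {k : ℕ} (hk : k ≠ 0) {y : ℝ} (hy : |y| < 1) :
    HasSum (fun n : ℕ ↦ 1 / ((k * n : ℕ) + 1 : ℝ) * y ^ (k * n))
      (∫ x in (0 : ℝ)..1, 1 / (1 - x ^ k * y ^ k)) := by
  refine hasSum_integral_of_hasSum_pow_smul ?_ fun x hx ↦ ?_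
  · simp only [norm_pow, Real.norm_eq_abs]
    exact (summable_one_div_add_one_mul_pow (by rwa [abs_abs])).comp_injective
      (mul_right_injective₀ hk)
  · refine hasSum_one_div_one_sub_pow_mul_pow hk ?_
    rw [abs_mul, abs_of_pos hx.1]
    exact mul_lt_one_of_nonneg_of_lt_one_left hx.1.le hx.2 hy.le

lemma injective_mul_add_one {k : ℕ} (hk : k ≠ 0) : Function.Injective fun n ↦ k * n + 1 :=
  (add_left_injective 1).comp (mul_right_injective₀ hk)

lemma summable_one_div_mul_add_one_sq {k : ℕ} (hk : k ≠ 0) :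
    Summable fun n : ℕ ↦ 1 / (k * n + 1 : ℝ) ^ 2 := by
  simpa [Function.comp_def] using
    (Real.summable_one_div_nat_pow.2 one_lt_two).comp_injective (injective_mul_add_one hk)

theorem hasSum_integral_integral_one_div_one_sub_pow_mul_pow {k : ℕ} (hk : k ≠ 0) :
    HasSum (fun n : ℕ ↦ 1 / (k * n + 1 : ℝ) ^ 2)
      (∫ y in (0 : ℝ)..1, ∫ x in (0 : ℝ)..1, 1 / (1 - x ^ k * y ^ k)) := by
  have one_div_sq (n : ℕ) : 1 / (k * n + 1 : ℝ) ^ 2 =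
      1 / ((k * n : ℕ) + 1 : ℝ) * (1 / ((k * n : ℕ) + 1 : ℝ)) := by
    rw [Nat.cast_mul, ← sq, one_div_pow]
  have summable_sq := summable_one_div_mul_add_one_sq hk
  simp only [one_div_sq] at summable_sq ⊢
  refine hasSum_integral_of_hasSum_pow_smul ?_ fun y hy ↦ ?_
  · refine summable_sq.congr fun n ↦ ?_
    rw [Real.norm_of_nonneg (by positivity)]
  · simpa only [smul_eq_mul, mul_comm] using
      hasSum_integral_one_div_one_sub_pow_mul_pow hk ((abs_of_pos hy.1).trans_lt hy.2)

lemma hasSum_one_div_odd_pow {s : ℕ} {S : ℝ} (h : HasSum (fun n : ℕ ↦ 1 / (n : ℝ) ^ s) S) :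
    HasSum (fun n : ℕ ↦ 1 / (2 * n + 1 : ℝ) ^ s) ((1 - 1 / 2 ^ s) * S) := by
  have even : HasSum (fun n : ℕ ↦ 1 / ((2 * n : ℕ) : ℝ) ^ s) (1 / 2 ^ s * S) := by
    simpa only [Nat.cast_mul, Nat.cast_ofNat, mul_pow, one_div, mul_inv] using
      h.mul_left (1 / 2 ^ s : ℝ)
  have odd : Summable fun n : ℕ ↦ 1 / ((2 * n + 1 : ℕ) : ℝ) ^ s :=
    h.summable.comp_injective (injective_mul_add_one two_ne_zero)
  have even_add_odd : 1 / 2 ^ s * S + ∑' n : ℕ, 1 / ((2 * n + 1 : ℕ) : ℝ) ^ s = S :=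
    (HasSum.even_add_odd (f := fun n : ℕ ↦ 1 / (n : ℝ) ^ s) even odd.hasSum).unique h
  have tsum_odd : ∑' n : ℕ, 1 / ((2 * n + 1 : ℕ) : ℝ) ^ s = (1 - 1 / 2 ^ s) * S := by
    linear_combination even_add_odd
  rw [← tsum_odd]
  exact_mod_cast odd.hasSum

/-- ∫₀¹ ∫₀¹ 1/(1 − x²·y²) dx dy = π²/8. -/
theorem integral_eq_pi_sq_div_eight :
    (∫ y in (0:ℝ)..1, ∫ x in (0:ℝ)..1, 1 / (1 - x ^ 2 * y ^ 2)) = Real.pi ^ 2 / 8 := by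
  have integral_sum := hasSum_integral_integral_one_div_one_sub_pow_mul_pow two_ne_zero
  have odd_sum := hasSum_one_div_odd_pow hasSum_zeta_two
  calc
    _ = (1 - 1 / 2 ^ 2) * (Real.pi ^ 2 / 6) := integral_sum.unique odd_sum
    _ = Real.pi ^ 2 / 8 := by ring
end

section
/- The improper integral ∫₀^∞ [arsinh(cosh u) − u] du equals π²/16. -/
/-!
Put `v = arsinh (cosh u)`, `s = v - u` and `t = v + u`. The relation `sinh v = cosh u` rearranges to
`exp (-s) = tanh (t / 2)` and, since `cosh` is even, also to `exp (-t) = tanh (s / 2)`. The Legendre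
chi function `χ₂ x = ∑ x ^ (2k+1) / (2k+1) ^ 2` satisfies `χ₂' x = artanh x / x`, so
`d χ₂ (exp (-s)) = -(t / 2) ds` and `d χ₂ (exp (-t)) = -(s / 2) dt`. Consequently
`(u * s + χ₂ (exp (-s)) - χ₂ (exp (-t))) / 2` is a primitive of `s` with respect to `u`. It vanishes
at `u = 0`, where `s = t`, and tends to `χ₂ 1 / 2 = π ^ 2 / 16` as `u → ∞`, where `s → 0` and
`t → ∞`.
-/

section

open Filter Real Set Topology

theorem hasSum_one_div_odd_sq : HasSum (fun k : ℕ ↦ 1 / (2 * (k : ℝ) + 1) ^ 2) (π ^ 2 / 8) := by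
  have hsummable : Summable fun k : ℕ ↦ 1 / (2 * (k : ℝ) + 1) ^ 2 := by
    simpa [Function.comp_def] using hasSum_zeta_two.summable.comp_injective
      (i := fun k : ℕ ↦ 2 * k + 1) fun a b h ↦ by simpa using h
  have hodd : HasSum (fun k : ℕ ↦ 1 / ((2 * k + 1 : ℕ) : ℝ) ^ 2)
      (∑' k : ℕ, 1 / (2 * (k : ℝ) + 1) ^ 2) := by
    simpa using hsummable.hasSum
  have heven : HasSum (fun k : ℕ ↦ 1 / ((2 * k : ℕ) : ℝ) ^ 2) (1 / 4 * (π ^ 2 / 6)) := by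
    refine (hasSum_zeta_two.mul_left (1 / 4)).congr_fun fun k ↦ ?_
    push_cast
    ring
  have hsplit : 1 / 4 * (π ^ 2 / 6) + ∑' k : ℕ, 1 / (2 * (k : ℝ) + 1) ^ 2 = π ^ 2 / 6 :=
    (heven.even_add_odd (f := fun n : ℕ ↦ 1 / (n : ℝ) ^ 2) hodd).unique hasSum_zeta_two
  exact hsummable.hasSum_iff.2 (by linarith)

/-- The Legendre chi function of order two, the odd part of the dilogarithm. It is meant for
arguments in `[-1, 1]`; elsewhere the series diverges and the value is `0`. -/
noncomputable def legendreChiTwo (x : ℝ) : ℝ :=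
  ∑' k : ℕ, x ^ (2 * k + 1) / (2 * (k : ℝ) + 1) ^ 2

@[simp]
theorem legendreChiTwo_zero : legendreChiTwo 0 = 0 := by
  simp [legendreChiTwo]

theorem legendreChiTwo_one : legendreChiTwo 1 = π ^ 2 / 8 := by
  simpa only [legendreChiTwo, one_pow] using hasSum_one_div_odd_sq.tsum_eq

theorem norm_legendreChiTwo_term_le {x : ℝ} (hx : |x| ≤ 1) (k : ℕ) :
    ‖x ^ (2 * k + 1) / (2 * (k : ℝ) + 1) ^ 2‖ ≤ 1 / (2 * (k : ℝ) + 1) ^ 2 := by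
  rw [norm_div, norm_pow, norm_of_nonneg (by positivity : (0 : ℝ) ≤ (2 * (k : ℝ) + 1) ^ 2)]
  gcongr
  exact pow_le_one₀ (norm_nonneg x) hx

theorem continuousOn_legendreChiTwo : ContinuousOn legendreChiTwo (Icc (-1) 1) :=
  continuousOn_tsum (fun k ↦ by fun_prop) hasSum_one_div_odd_sq.summable
    fun k _ hx ↦ norm_legendreChiTwo_term_le (abs_le.2 hx) k

theorem hasSum_artanh {x : ℝ} (hx : |x| < 1) :
    HasSum (fun k : ℕ ↦ x ^ (2 * k + 1) / (2 * (k : ℝ) + 1)) (artanh x) := by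
  obtain ⟨hx₁, hx₂⟩ := abs_lt.1 hx
  have hlog : artanh x = 1 / 2 * (log (1 + x) - log (1 - x)) := by
    rw [artanh_eq_half_log ⟨hx₁.le, hx₂.le⟩, log_div (by linarith) (by linarith)]
  rw [hlog]
  refine ((hasSum_log_sub_log_of_abs_lt_one hx).mul_left (1 / 2)).congr_fun fun k ↦ ?_
  ring

theorem hasDerivAt_legendreChiTwo {x : ℝ} (hx : |x| < 1) (hx₀ : x ≠ 0) :
    HasDerivAt legendreChiTwo (artanh x / x) x := by
  obtain ⟨r, hxr, hr⟩ := exists_between hx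
  have hr₀ : 0 ≤ r := (abs_nonneg x).trans hxr.le
  have hmem : x ∈ Ioo (-r) r := abs_lt.1 hxr
  have hterm (k : ℕ) (y : ℝ) :
      HasDerivAt (fun y ↦ y ^ (2 * k + 1) / (2 * (k : ℝ) + 1) ^ 2)
        (y ^ (2 * k) / (2 * (k : ℝ) + 1)) y := by
    refine ((hasDerivAt_pow (2 * k + 1) y).div_const _).congr_deriv ?_
    push_cast
    field
  have hbound (k : ℕ) (y : ℝ) (hy : y ∈ Ioo (-r) r) :
      ‖y ^ (2 * k) / (2 * (k : ℝ) + 1)‖ ≤ (r ^ 2) ^ k := by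
    rw [norm_div, norm_pow, norm_of_nonneg (by positivity : (0 : ℝ) ≤ 2 * (k : ℝ) + 1), ← pow_mul]
    calc ‖y‖ ^ (2 * k) / (2 * (k : ℝ) + 1) ≤ ‖y‖ ^ (2 * k) :=
          div_le_self (by positivity) (by linarith [k.cast_nonneg (α := ℝ)])
      _ ≤ r ^ (2 * k) := pow_le_pow_left₀ (norm_nonneg y) (abs_lt.2 hy).le _
  have hgeom : Summable fun k : ℕ ↦ (r ^ 2) ^ k :=
    summable_geometric_of_lt_one (sq_nonneg r) (pow_lt_one₀ hr₀ hr two_ne_zero)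
  have hsummable : Summable fun k : ℕ ↦ x ^ (2 * k + 1) / (2 * (k : ℝ) + 1) ^ 2 :=
    .of_norm_bounded hasSum_one_div_odd_sq.summable (norm_legendreChiTwo_term_le hx.le)
  refine (hasDerivAt_tsum_of_isPreconnected hgeom isOpen_Ioo isPreconnected_Ioo
    (fun k y _ ↦ hterm k y) hbound hmem hsummable hmem).congr_deriv ?_
  rw [← (hasSum_artanh hx).tsum_eq, ← tsum_div_const]
  refine tsum_congr fun k ↦ ?_
  field

theorem hasDerivAt_legendreChiTwo_exp_neg {f : ℝ → ℝ} {f' x : ℝ} (hf : HasDerivAt f f' x)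
    (hpos : 0 < f x) :
    HasDerivAt (fun x ↦ legendreChiTwo (exp (-f x))) (-artanh (exp (-f x)) * f') x := by
  have hlt : |exp (-f x)| < 1 := by rwa [abs_exp, exp_lt_one_iff, neg_lt_zero]
  refine ((hasDerivAt_legendreChiTwo hlt (exp_ne_zero _)).comp x hf.fun_neg.exp).congr_deriv ?_
  field

theorem continuousOn_legendreChiTwo_exp_neg :
    ContinuousOn (fun s ↦ legendreChiTwo (exp (-s))) (Ici 0) :=
  continuousOn_legendreChiTwo.comp (by fun_prop) fun s hs ↦
    ⟨neg_one_lt_zero.le.trans (exp_pos _).le, exp_le_one_iff.2 (neg_nonpos.2 hs)⟩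

theorem tendsto_legendreChiTwo_exp_neg_atTop :
    Tendsto (fun s ↦ legendreChiTwo (exp (-s))) atTop (𝓝 0) := by
  have hcont : ContinuousAt legendreChiTwo 0 :=
    continuousOn_legendreChiTwo.continuousAt (Icc_mem_nhds (by norm_num) (by norm_num))
  simpa [Function.comp_def] using hcont.tendsto.comp tendsto_exp_neg_atTop_nhds_zero

theorem artanh_exp_sub_of_sinh_eq_cosh {u v : ℝ} (h : sinh v = cosh u) :
    artanh (exp (u - v)) = (u + v) / 2 := by
  obtain ⟨w, d, rfl, rfl⟩ : ∃ w d, u = w - d ∧ v = w + d :=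
    ⟨(u + v) / 2, (v - u) / 2, by ring, by ring⟩
  have hexp : sinh w * exp d = exp (-d) * cosh w := by
    rw [sinh_add, cosh_sub] at h
    rw [← cosh_add_sinh, ← cosh_sub_sinh]
    linear_combination h
  have htanh : tanh w = exp (w - d - (w + d)) := by
    rw [show w - d - (w + d) = -d - d by ring, exp_sub, tanh_eq_sinh_div_cosh,
      div_eq_div_iff (cosh_pos w).ne' (exp_ne_zero d), hexp]
  rw [← htanh, artanh_tanh]
  ring

theorem lt_arsinh_cosh (u : ℝ) : u < arsinh (cosh u) := by
  rw [← sinh_lt_sinh, sinh_arsinh]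
  exact sinh_lt_cosh u

theorem neg_lt_arsinh_cosh (u : ℝ) : -u < arsinh (cosh u) := by
  simpa only [cosh_neg] using lt_arsinh_cosh (-u)

theorem arsinh_cosh_sub_id_le_exp_neg (u : ℝ) : arsinh (cosh u) - u ≤ exp (-u) := by
  have hmono := sinh_sub_id_strictMono.monotone (lt_arsinh_cosh u).le
  simp only [sinh_arsinh] at hmono
  linarith [cosh_sub_sinh u]

theorem tendsto_arsinh_cosh_sub_id : Tendsto (fun u ↦ arsinh (cosh u) - u) atTop (𝓝 0) :=
  squeeze_zero (fun u ↦ (sub_pos.2 (lt_arsinh_cosh u)).le) arsinh_cosh_sub_id_le_exp_neg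
    tendsto_exp_neg_atTop_nhds_zero

theorem tendsto_mul_arsinh_cosh_sub_id :
    Tendsto (fun u ↦ u * (arsinh (cosh u) - u)) atTop (𝓝 0) := by
  have hexp : Tendsto (fun u : ℝ ↦ u * exp (-u)) atTop (𝓝 0) := by
    simpa only [pow_one] using tendsto_pow_mul_exp_neg_atTop_nhds_zero 1
  refine squeeze_zero' ?_ ?_ hexp
  all_goals filter_upwards [eventually_ge_atTop 0] with u hu
  · exact mul_nonneg hu (sub_pos.2 (lt_arsinh_cosh u)).le
  · exact mul_le_mul_of_nonneg_left (arsinh_cosh_sub_id_le_exp_neg u) hu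

theorem tendsto_arsinh_cosh_add_id : Tendsto (fun u ↦ arsinh (cosh u) + u) atTop atTop :=
  tendsto_atTop_mono (fun u ↦ le_add_of_nonneg_left (arsinh_nonneg_iff.2 (cosh_pos u).le))
    tendsto_id

/-- A primitive of `u ↦ arsinh (cosh u) - u`, normalised to vanish at `0`. -/
noncomputable def arsinhCoshSubIdPrimitive (u : ℝ) : ℝ :=
  (u * (arsinh (cosh u) - u) + legendreChiTwo (exp (-(arsinh (cosh u) - u)))
    - legendreChiTwo (exp (-(arsinh (cosh u) + u)))) / 2

@[simp]
theorem arsinhCoshSubIdPrimitive_zero : arsinhCoshSubIdPrimitive 0 = 0 := by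
  simp [arsinhCoshSubIdPrimitive]

theorem hasDerivAt_arsinhCoshSubIdPrimitive (u : ℝ) :
    HasDerivAt arsinhCoshSubIdPrimitive (arsinh (cosh u) - u) u := by
  have hv := (hasDerivAt_cosh u).arsinh
  have hs := hv.fun_sub (hasDerivAt_id' u)
  have ht := hv.fun_add (hasDerivAt_id' u)
  have hχs := hasDerivAt_legendreChiTwo_exp_neg hs (sub_pos.2 (lt_arsinh_cosh u))
  have hχt := hasDerivAt_legendreChiTwo_exp_neg ht (neg_lt_iff_pos_add.1 (neg_lt_arsinh_cosh u))
  have hartanh_s : artanh (exp (-(arsinh (cosh u) - u))) = (arsinh (cosh u) + u) / 2 := by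
    rw [neg_sub, artanh_exp_sub_of_sinh_eq_cosh (sinh_arsinh _), add_comm]
  have hartanh_t : artanh (exp (-(arsinh (cosh u) + u))) = (arsinh (cosh u) - u) / 2 := by
    rw [neg_add_rev, ← sub_eq_add_neg,
      artanh_exp_sub_of_sinh_eq_cosh ((sinh_arsinh _).trans (cosh_neg u).symm), neg_add_eq_sub]
  refine (((((hasDerivAt_id' u).mul hs).add hχs).sub hχt).div_const 2).congr_deriv ?_
  rw [hartanh_s, hartanh_t]
  ring

theorem tendsto_arsinhCoshSubIdPrimitive :
    Tendsto arsinhCoshSubIdPrimitive atTop (𝓝 (π ^ 2 / 16)) := by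
  have hs : Tendsto (fun u ↦ legendreChiTwo (exp (-(arsinh (cosh u) - u)))) atTop
      (𝓝 (π ^ 2 / 8)) := by
    have hwithin : Tendsto (fun u ↦ arsinh (cosh u) - u) atTop (𝓝[Ici 0] 0) :=
      tendsto_nhdsWithin_iff.2 ⟨tendsto_arsinh_cosh_sub_id,
        Eventually.of_forall fun u ↦ (sub_pos.2 (lt_arsinh_cosh u)).le⟩
    have hcont := (continuousOn_legendreChiTwo_exp_neg 0 self_mem_Ici).tendsto
    rw [neg_zero, exp_zero, legendreChiTwo_one] at hcont
    exact hcont.comp hwithin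
  have ht : Tendsto (fun u ↦ legendreChiTwo (exp (-(arsinh (cosh u) + u)))) atTop (𝓝 0) :=
    tendsto_legendreChiTwo_exp_neg_atTop.comp tendsto_arsinh_cosh_add_id
  have hlim := ((tendsto_mul_arsinh_cosh_sub_id.add hs).sub ht).div_const 2
  rwa [show (0 + π ^ 2 / 8 - 0) / 2 = π ^ 2 / 16 by ring] at hlim

end

/-- ∫₀^∞ [arsinh(cosh u) − u] du = π²/16. -/
theorem integral_arsinh_cosh_sub_id :
    (∫ u in Set.Ioi (0:ℝ), (Real.arsinh (Real.cosh u) - u)) = Real.pi ^ 2 / 16 := by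
  rw [MeasureTheory.integral_Ioi_of_hasDerivAt_of_nonneg'
    (fun u _ ↦ hasDerivAt_arsinhCoshSubIdPrimitive u)
    (fun u _ ↦ (sub_pos.2 (lt_arsinh_cosh u)).le) tendsto_arsinhCoshSubIdPrimitive,
    arsinhCoshSubIdPrimitive_zero, sub_zero]
end

section
/- Li₂(√2 − 1) + Li₂(1 − √2/2) = π²/8 − (1/2)·ln²(1+√2) − (1/8)·ln² 2. -/
/-- The real dilogarithm Li₂(z) = ∑_{k=1}^∞ z^k/k², for |z| ≤ 1. -/
noncomputable def Li2 (z : ℝ) : ℝ := ∑' k : ℕ, z ^ (k + 1) / ((k : ℝ) + 1) ^ 2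

/-!
Landen's identity at `x = 1 - √2` evaluates `Li₂(1 - √2) + Li₂(1 - √2/2)`, so it remains to find
the odd part `2 χ₂(√2 - 1)` of `Li₂`. The functional equation of Legendre's chi function relates
its values at `x` and `(1 - x)/(1 + x)`, and `√2 - 1` is the fixed point of this involution.
-/

open Set Real Topology

section Calculus

variable {E : Type*} [NormedAddCommGroup E] [NormedSpace ℝ E]

lemma eq_of_hasDerivAt_zero_on_uIoo [CompleteSpace E] {f : ℝ → E} {a b : ℝ}
    (hf : ContinuousOn f (uIcc a b)) (hf' : ∀ x ∈ uIoo a b, HasDerivAt f 0 x) : f b = f a := by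
  have h := intervalIntegral.integral_eq_sub_of_hasDeriv_right hf
    (fun x hx ↦ (hf' x hx).hasDerivWithinAt) intervalIntegrable_const
  rwa [intervalIntegral.integral_zero, eq_comm, sub_eq_zero] at h

lemma continuousAt_log_smul_zero {g : ℝ → E} (hg : DifferentiableAt ℝ g 0) (hg0 : g 0 = 0) :
    ContinuousAt (fun x ↦ log x • g x) 0 := by
  have hfactor : (fun x ↦ log x • g x) = fun x ↦ (x * log x) • dslope g 0 x := by
    ext x
    have hx : x • dslope g 0 x = g x := by simpa [hg0] using sub_smul_dslope g 0 x
    rw [mul_comm, mul_smul, hx]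
  rw [hfactor]
  exact continuous_mul_log.continuousAt.smul (continuousAt_dslope_same.2 hg)

lemma hasDerivAt_artanh {x : ℝ} (hx : x ∈ Ioo (-1) 1) : HasDerivAt artanh (1 - x ^ 2)⁻¹ x := by
  have h₁ : 0 < 1 + x := by linarith [hx.1]
  have h₂ : 0 < 1 - x := by linarith [hx.2]
  have hquot : HasDerivAt (fun y : ℝ ↦ (1 + y) / (1 - y))
      ((1 * (1 - x) - (1 + x) * (-1)) / (1 - x) ^ 2) x :=
    ((hasDerivAt_id x).const_add 1).div ((hasDerivAt_id x).const_sub 1) h₂.ne'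
  have hlog := (hquot.log (div_pos h₁ h₂).ne').const_mul (1 / 2)
  have heq : artanh =ᶠ[𝓝 x] fun y ↦ 1 / 2 * log ((1 + y) / (1 - y)) := by
    filter_upwards [Ioo_mem_nhds hx.1 hx.2] with y hy
    exact artanh_eq_half_log (Ioo_subset_Icc_self hy)
  refine (hlog.congr_of_eventuallyEq heq).congr_deriv ?_
  have hsq : 1 - x ^ 2 = (1 + x) * (1 - x) := by ring
  rw [hsq]
  field_simp
  ring

lemma one_sub_div_one_add_mem_Icc {x : ℝ} (hx : 0 ≤ x) : (1 - x) / (1 + x) ∈ Icc (-1) 1 := by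
  have h : 0 < 1 + x := by linarith
  constructor
  · rw [le_div_iff₀ h]; linarith
  · rw [div_le_iff₀ h]; linarith

lemma artanh_one_sub_div_one_add {x : ℝ} (hx : 0 ≤ x) :
    artanh ((1 - x) / (1 + x)) = -log x / 2 := by
  have h : 0 < 1 + x := by linarith
  have hnum : 1 + (1 - x) / (1 + x) = 2 / (1 + x) := by field_simp; ring
  have hden : 1 - (1 - x) / (1 + x) = 2 * x / (1 + x) := by field_simp; ring
  rw [artanh_eq_half_log (one_sub_div_one_add_mem_Icc hx), hnum, hden,
    div_div_div_cancel_right₀ h.ne', div_mul_cancel_left₀ two_ne_zero, log_inv]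
  ring

end Calculus

section Dilogarithm

lemma summable_one_div_nat_add_one_sq : Summable fun k : ℕ ↦ 1 / ((k : ℝ) + 1) ^ 2 := by
  simpa using (summable_nat_add_iff 1).2 (summable_one_div_nat_pow.2 one_lt_two)

lemma norm_Li2_term_le {x : ℝ} (hx : x ∈ Icc (-1) 1) (k : ℕ) :
    ‖x ^ (k + 1) / ((k : ℝ) + 1) ^ 2‖ ≤ 1 / ((k : ℝ) + 1) ^ 2 := by
  rw [norm_div, norm_pow, norm_of_nonneg (by positivity : (0 : ℝ) ≤ ((k : ℝ) + 1) ^ 2)]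
  gcongr
  exact pow_le_one₀ (norm_nonneg x) (abs_le.2 hx)

lemma hasSum_Li2 {x : ℝ} (hx : x ∈ Icc (-1) 1) :
    HasSum (fun k : ℕ ↦ x ^ (k + 1) / ((k : ℝ) + 1) ^ 2) (Li2 x) :=
  (summable_one_div_nat_add_one_sq.of_norm_bounded (norm_Li2_term_le hx)).hasSum

lemma continuousOn_Li2 : ContinuousOn Li2 (Icc (-1) 1) :=
  continuousOn_tsum (fun k ↦ by fun_prop) summable_one_div_nat_add_one_sq
    fun k _ hx ↦ norm_Li2_term_le hx k

lemma Li2_zero : Li2 0 = 0 := by simp [Li2]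

lemma Li2_one : Li2 1 = π ^ 2 / 6 := by
  have h := (hasSum_nat_add_iff' 1).2 hasSum_zeta_two
  simpa [Li2] using h.tsum_eq

lemma Li2_add_Li2_neg {x : ℝ} (hx : x ∈ Icc (-1) 1) : Li2 x + Li2 (-x) = Li2 (x ^ 2) / 2 := by
  have hneg : -x ∈ Icc (-1) 1 := ⟨by linarith [hx.2], by linarith [hx.1]⟩
  have hsq : x ^ 2 ∈ Icc (-1) 1 := ⟨by nlinarith, by nlinarith [hx.1, hx.2]⟩
  have heven : HasSum (fun k : ℕ ↦ x ^ (2 * k + 1) / (((2 * k : ℕ) : ℝ) + 1) ^ 2 +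
      (-x) ^ (2 * k + 1) / (((2 * k : ℕ) : ℝ) + 1) ^ 2) 0 := by
    convert! hasSum_zero using 1
    ext k
    rw [(odd_two_mul_add_one k).neg_pow]
    ring
  have hodd : HasSum (fun k : ℕ ↦ x ^ (2 * k + 1 + 1) / (((2 * k + 1 : ℕ) : ℝ) + 1) ^ 2 +
      (-x) ^ (2 * k + 1 + 1) / (((2 * k + 1 : ℕ) : ℝ) + 1) ^ 2) (Li2 (x ^ 2) / 2) := by
    convert! (hasSum_Li2 hsq).div_const 2 using 1
    ext k
    have hk : 2 * k + 1 + 1 = 2 * (k + 1) := by ring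
    have hcast : ((2 * k + 1 : ℕ) : ℝ) + 1 = 2 * (k + 1) := by push_cast; ring
    rw [hk, hcast, (even_two_mul (k + 1)).neg_pow, pow_mul]
    field_simp
    norm_num
  have hsum := ((hasSum_Li2 hx).add (hasSum_Li2 hneg)).unique (heven.even_add_odd hodd)
  rwa [zero_add] at hsum

lemma hasDerivAt_Li2_tsum {x : ℝ} (hx : |x| < 1) :
    HasDerivAt Li2 (∑' k : ℕ, x ^ k / ((k : ℝ) + 1)) x := by
  obtain ⟨r, hxr, hr1⟩ := exists_between hx
  have hr0 : 0 < r := (abs_nonneg x).trans_lt hxr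
  refine hasDerivAt_tsum_of_isPreconnected (g := fun (k : ℕ) z ↦ z ^ (k + 1) / ((k : ℝ) + 1) ^ 2)
    (g' := fun (k : ℕ) z ↦ z ^ k / ((k : ℝ) + 1)) (t := Metric.ball 0 r) (y₀ := 0)
    (summable_geometric_of_lt_one hr0.le hr1) Metric.isOpen_ball
    (convex_ball 0 r).isPreconnected (fun k y _ ↦ ?_) (fun k y hy ↦ ?_)
    (Metric.mem_ball_self hr0) (hasSum_Li2 (by simp)).summable (mem_ball_zero_iff.2 hxr)
  · refine ((hasDerivAt_pow (k + 1) y).div_const _).congr_deriv ?_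
    push_cast
    field_simp
  · rw [mem_ball_zero_iff] at hy
    rw [norm_div, norm_pow, norm_of_nonneg (by positivity : (0 : ℝ) ≤ (k : ℝ) + 1)]
    calc ‖y‖ ^ k / ((k : ℝ) + 1) ≤ ‖y‖ ^ k := div_le_self (by positivity) (by simp)
      _ ≤ r ^ k := by gcongr

lemma hasDerivAt_Li2 {x : ℝ} (hx : |x| < 1) (hx0 : x ≠ 0) :
    HasDerivAt Li2 (-log (1 - x) / x) x := by
  refine (hasDerivAt_Li2_tsum hx).congr_deriv ?_
  rw [← ((hasSum_pow_div_log_of_abs_lt_one hx).div_const x).tsum_eq]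
  congr 1 with k
  rw [pow_succ]
  field_simp

lemma hasDerivAt_Li2_div_sub_one {x : ℝ} (hx : x < 1 / 2) (hx0 : x ≠ 0) :
    HasDerivAt (fun y ↦ Li2 (y / (y - 1))) (log (1 - x) / (x * (1 - x))) x := by
  have hne : x - 1 ≠ 0 := by linarith
  have hne' : 1 - x ≠ 0 := by linarith
  have hlt : |x / (x - 1)| < 1 := by
    rw [abs_div, div_lt_one (abs_pos.2 hne)]
    exact sq_lt_sq.1 (by linarith)
  have hquot := (hasDerivAt_id x).div ((hasDerivAt_id x).sub_const 1) hne
  refine ((hasDerivAt_Li2 hlt (div_ne_zero hx0 hne)).comp x hquot).congr_deriv ?_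
  have hinv : 1 - x / (x - 1) = (1 - x)⁻¹ := by grind
  simp only [id, hinv, log_inv]
  grind

lemma Li2_landen {x : ℝ} (hx : x ∈ Icc (-1) (1 / 2)) :
    Li2 x + Li2 (x / (x - 1)) = -log (1 - x) ^ 2 / 2 := by
  have hsub : uIcc 0 x ⊆ Icc (-1) (1 / 2) := uIcc_subset_Icc (by norm_num) hx
  have hcont : ContinuousOn (fun y ↦ Li2 y + Li2 (y / (y - 1)) + log (1 - y) ^ 2 / 2)
      (Icc (-1) (1 / 2)) := by
    have hlt : ∀ y ∈ Icc (-1 : ℝ) (1 / 2), y - 1 < 0 := fun y hy ↦ by linarith [hy.2]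
    refine .add (.add (continuousOn_Li2.mono (Icc_subset_Icc_right (by norm_num))) ?_) ?_
    · refine continuousOn_Li2.comp (.div (by fun_prop) (by fun_prop) fun y hy ↦ (hlt y hy).ne) ?_
      intro y hy
      constructor
      · rw [le_div_iff_of_neg (hlt y hy)]; linarith [hy.2]
      · rw [div_le_iff_of_neg (hlt y hy)]; linarith [hy.1]
    · exact ((ContinuousOn.log (by fun_prop) fun y hy ↦ by linarith [hlt y hy]).pow 2).div_const 2
  have hderiv : ∀ y ∈ uIoo 0 x,
      HasDerivAt (fun y ↦ Li2 y + Li2 (y / (y - 1)) + log (1 - y) ^ 2 / 2) 0 y := by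
    intro y hy
    obtain ⟨hy1, hy2, hy0⟩ : -1 < y ∧ y < 1 / 2 ∧ y ≠ 0 := by grind [uIoo]
    have hne : 1 - y ≠ 0 := by linarith
    have hlog := ((((hasDerivAt_id y).const_sub 1).log hne).pow 2).div_const 2
    refine (((hasDerivAt_Li2 (abs_lt.2 ⟨hy1, by linarith⟩) hy0).add
      (hasDerivAt_Li2_div_sub_one hy2 hy0)).add hlog).congr_deriv ?_
    simp only [id]
    field_simp
    ring
  have hconst := eq_of_hasDerivAt_zero_on_uIoo (hcont.mono hsub) hderiv
  simp only [Li2_zero, zero_div, sub_zero, log_one] at hconst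
  linarith

end Dilogarithm

section LegendreChi

/-- Legendre's chi function `χ₂(x) = ∑ x^(2k+1)/(2k+1)²` for `|x| ≤ 1`, encoded as the odd part of
the dilogarithm. -/
noncomputable def legendreChi (x : ℝ) : ℝ := (Li2 x - Li2 (-x)) / 2

lemma legendreChi_zero : legendreChi 0 = 0 := by simp [legendreChi]

lemma legendreChi_one : legendreChi 1 = π ^ 2 / 8 := by
  have h := Li2_add_Li2_neg (x := 1) (by norm_num)
  rw [one_pow, Li2_one] at h
  rw [legendreChi, Li2_one]
  linarith

lemma continuousOn_legendreChi : ContinuousOn legendreChi (Icc (-1) 1) :=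
  (continuousOn_Li2.sub (continuousOn_Li2.comp continuousOn_neg
    fun x hx ↦ ⟨by linarith [hx.2], by linarith [hx.1]⟩)).div_const 2

lemma hasDerivAt_legendreChi {x : ℝ} (hx : |x| < 1) (hx0 : x ≠ 0) :
    HasDerivAt legendreChi (artanh x / x) x := by
  obtain ⟨hx1, hx2⟩ := abs_lt.1 hx
  have hneg := (hasDerivAt_Li2 (by rwa [abs_neg]) (neg_ne_zero.2 hx0)).comp x (hasDerivAt_neg x)
  refine (((hasDerivAt_Li2 hx hx0).sub hneg).div_const 2).congr_deriv ?_
  rw [artanh_eq_half_log ⟨hx1.le, hx2.le⟩, log_div (by linarith) (by linarith), sub_neg_eq_add]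
  field_simp
  ring

lemma hasDerivAt_legendreChi_one_sub_div_one_add {x : ℝ} (hx0 : 0 < x) (hx1 : x ≠ 1) :
    HasDerivAt (fun y ↦ legendreChi ((1 - y) / (1 + y))) (log x / (1 - x ^ 2)) x := by
  have hsub : 1 - x ≠ 0 := sub_ne_zero.2 hx1.symm
  have hadd : 1 + x ≠ 0 := by linarith
  have hlt : |(1 - x) / (1 + x)| < 1 := by
    rw [abs_div, div_lt_one (abs_pos.2 hadd)]
    exact sq_lt_sq.1 (by linarith)
  have hquot := ((hasDerivAt_id x).const_sub 1).div ((hasDerivAt_id x).const_add 1) hadd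
  refine ((hasDerivAt_legendreChi hlt (div_ne_zero hsub hadd)).comp x hquot).congr_deriv ?_
  have hsq : 1 - x ^ 2 = (1 + x) * (1 - x) := by ring
  simp only [id, artanh_one_sub_div_one_add hx0.le, hsq]
  field_simp
  ring

lemma legendreChi_add_legendreChi {x : ℝ} (hx0 : 0 ≤ x) (hx1 : x < 1) :
    legendreChi x + legendreChi ((1 - x) / (1 + x)) = π ^ 2 / 8 + log x * artanh x := by
  have hcont : ContinuousOn (fun y ↦ legendreChi y + legendreChi ((1 - y) / (1 + y)) -
      log y * artanh y) (Icc 0 x) := by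
    refine .sub (.add (continuousOn_legendreChi.mono (Icc_subset_Icc (by norm_num) hx1.le)) ?_) ?_
    · exact continuousOn_legendreChi.comp
        (.div (by fun_prop) (by fun_prop) fun y hy ↦ by linarith [hy.1])
        fun y hy ↦ one_sub_div_one_add_mem_Icc hy.1
    · intro y hy
      have hartanh := hasDerivAt_artanh (x := y) ⟨by linarith [hy.1], by linarith [hy.2]⟩
      apply ContinuousAt.continuousWithinAt
      rcases hy.1.eq_or_lt with rfl | hy0
      · exact continuousAt_log_smul_zero hartanh.differentiableAt artanh_zero
      · exact (continuousAt_log hy0.ne').mul hartanh.continuousAt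
  have hderiv : ∀ y ∈ Ioo 0 x, HasDerivAt (fun y ↦ legendreChi y +
      legendreChi ((1 - y) / (1 + y)) - log y * artanh y) 0 y := by
    intro y ⟨hy0, hyx⟩
    have hchi := hasDerivAt_legendreChi (abs_lt.2 ⟨by linarith, by linarith⟩) hy0.ne'
    have hchiquot := hasDerivAt_legendreChi_one_sub_div_one_add hy0 (by linarith)
    have hprod := (hasDerivAt_log hy0.ne').mul
      (hasDerivAt_artanh (x := y) ⟨by linarith, by linarith⟩)
    refine ((hchi.add hchiquot).sub hprod).congr_deriv ?_
    ring
  have hconst := eq_of_hasDerivAt_zero_on_uIoo (a := 0) (b := x)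
    (by rwa [uIcc_of_le hx0]) (by rwa [uIoo_of_le hx0])
  simp only [legendreChi_zero, legendreChi_one, sub_zero, add_zero, div_one, log_zero,
    zero_mul, zero_add] at hconst
  linarith

lemma legendreChi_sqrt_two_sub_one :
    legendreChi (√2 - 1) = π ^ 2 / 16 - log (1 + √2) ^ 2 / 4 := by
  have hsq : √2 ^ 2 = 2 := sq_sqrt zero_le_two
  have hone : 1 < √2 := one_lt_sqrt_two
  have hfixed : (1 - (√2 - 1)) / (1 + (√2 - 1)) = √2 - 1 := by
    rw [div_eq_iff (by linarith)]
    linarith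
  have hlog : log (√2 - 1) = -log (1 + √2) := by
    rw [← log_inv]
    congr 1
    exact eq_inv_of_mul_eq_one_left (by linarith)
  have hartanh := artanh_one_sub_div_one_add (x := √2 - 1) (by linarith)
  have hchi := legendreChi_add_legendreChi (x := √2 - 1) (by linarith) (by nlinarith)
  rw [hfixed] at hartanh hchi
  rw [hartanh, hlog] at hchi
  linarith

end LegendreChi

/-- Li₂(√2 − 1) + Li₂(1 − √2/2) = π²/8 − (1/2)·ln²(1+√2) − (1/8)·ln² 2. -/
theorem dilog_two_term_identity :
    Li2 (Real.sqrt 2 - 1) + Li2 (1 - Real.sqrt 2 / 2) =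
      Real.pi ^ 2 / 8 - (1 / 2) * Real.log (1 + Real.sqrt 2) ^ 2
        - (1 / 8) * Real.log 2 ^ 2 := by
  have hsq : √2 ^ 2 = 2 := sq_sqrt zero_le_two
  have hquot : (1 - √2) / (1 - √2 - 1) = 1 - √2 / 2 := by
    rw [div_eq_iff (by linarith [one_lt_sqrt_two])]
    linarith
  have hlanden : Li2 (1 - √2) + Li2 (1 - √2 / 2) = -(log 2 / 2) ^ 2 / 2 := by
    rw [← hquot, Li2_landen ⟨by nlinarith, by linarith [one_lt_sqrt_two]⟩, sub_sub_cancel,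
      log_sqrt zero_le_two]
  have hchi := legendreChi_sqrt_two_sub_one
  rw [legendreChi, neg_sub] at hchi
  linarith
end

section
/- The double integral over the unit square ∫₀¹ ∫₀¹ 1/(1 − x·y) dx dy equals π²/6. -/
/-!
Expanding the geometric series in `x` and integrating termwise gives
`∫₀¹ dx / (1 - x y) = ∑ yⁿ / (n + 1)` for `0 < y < 1`. Integrating that power series termwise in `y`
gives `∑ 1 / (n + 1)² = ζ(2)`. The second interchange reaches the boundary of the disc of
convergence; it is legitimate there because the integrals of the norms of the terms are summable.
-/

open intervalIntegral MeasureTheory Set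

theorem integral_pow_smul_const {E : Type*} [NormedAddCommGroup E] [NormedSpace ℝ E]
    [CompleteSpace E] (r : ℝ) (n : ℕ) (c : E) :
    ∫ x in (0 : ℝ)..r, x ^ n • c = (r ^ (n + 1) / (n + 1)) • c := by
  simp [intervalIntegral.integral_smul_const, integral_pow]

theorem hasSum_integral_tsum_pow_smul_s16 {E : Type*} [NormedAddCommGroup E] [NormedSpace ℝ E]
    [CompleteSpace E] {a : ℕ → E} {r : ℝ} (hr : 0 ≤ r)
    (ha : Summable fun n : ℕ ↦ r ^ (n + 1) / (n + 1) * ‖a n‖) :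
    HasSum (fun n : ℕ ↦ (r ^ (n + 1) / (n + 1)) • a n)
      (∫ x in (0 : ℝ)..r, ∑' n, x ^ n • a n) := by
  have integrable_term (n : ℕ) : IntegrableOn (fun x : ℝ ↦ x ^ n • a n) (Ioc 0 r) :=
    Continuous.integrableOn_Ioc (by fun_prop)
  have integral_norm_term (n : ℕ) :
      ∫ x in Ioc 0 r, ‖x ^ n • a n‖ = r ^ (n + 1) / (n + 1) * ‖a n‖ := by
    rw [← smul_eq_mul, ← integral_pow_smul_const, integral_of_le hr]
    refine setIntegral_congr_fun measurableSet_Ioc fun x hx ↦ ?_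
    simp [norm_smul, abs_of_pos hx.1]
  simpa only [← integral_of_le hr, integral_pow_smul_const] using
    hasSum_integral_of_summable_integral_norm integrable_term
      (by simpa only [integral_norm_term] using ha)

theorem hasSum_integral_inv_one_sub_smul {A : Type*} [NormedDivisionRing A] [NormedAlgebra ℝ A]
    [CompleteSpace A] {r : ℝ} {y : A} (hr : 0 ≤ r) (hy : ‖r • y‖ < 1) :
    HasSum (fun n : ℕ ↦ (r ^ (n + 1) / (n + 1)) • y ^ n)
      (∫ x in (0 : ℝ)..r, (1 - x • y)⁻¹) := by
  have geometric : EqOn (fun x : ℝ ↦ (1 - x • y)⁻¹) (fun x ↦ ∑' n, x ^ n • y ^ n) (uIcc 0 r) := by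
    intro x hx
    rw [uIcc_of_le hr] at hx
    have hxy : ‖x • y‖ < 1 := by
      refine lt_of_le_of_lt ?_ hy
      rw [norm_smul, norm_smul, Real.norm_of_nonneg hx.1, Real.norm_of_nonneg hr]
      gcongr
      exact hx.2
    simp only [← smul_pow, tsum_geometric_of_norm_lt_one hxy]
  rw [integral_congr geometric]
  refine hasSum_integral_tsum_pow_smul_s16 hr ?_
  refine .of_nonneg_of_le (fun n ↦ by positivity) (fun n ↦ ?_)
    ((summable_geometric_of_lt_one (norm_nonneg _) hy).mul_left r)
  calc r ^ (n + 1) / (n + 1) * ‖y ^ n‖ ≤ r ^ (n + 1) * ‖y ^ n‖ := by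
        gcongr
        exact div_le_self (by positivity) (by simp)
    _ = r * ‖r • y‖ ^ n := by
        rw [norm_pow, norm_smul, Real.norm_of_nonneg hr]
        ring

theorem hasSum_one_div_nat_add_one_sq :
    HasSum (fun n : ℕ ↦ 1 / ((n : ℝ) + 1) ^ 2) (Real.pi ^ 2 / 6) := by
  simpa using (hasSum_nat_add_iff' 1).2 hasSum_zeta_two

/-- ∫₀¹ ∫₀¹ 1/(1 − x·y) dx dy = π²/6. -/
theorem beukers_integral_eq_pi_sq_div_six :
    (∫ y in (0:ℝ)..1, ∫ x in (0:ℝ)..1, 1 / (1 - x * y)) = Real.pi ^ 2 / 6 := by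
  have inner_eq : EqOn (fun y : ℝ ↦ ∫ x in (0 : ℝ)..1, 1 / (1 - x * y))
      (fun y ↦ ∑' n : ℕ, y ^ n • (1 / ((n : ℝ) + 1))) (Ioo 0 1) := by
    intro y hy
    have hy_norm : ‖(1 : ℝ) • y‖ < 1 := by simpa [abs_of_pos hy.1] using hy.2
    simpa [mul_comm] using (hasSum_integral_inv_one_sub_smul zero_le_one hy_norm).tsum_eq.symm
  have outer : HasSum (fun n : ℕ ↦ 1 / ((n : ℝ) + 1) ^ 2)
      (∫ y in (0 : ℝ)..1, ∑' n : ℕ, y ^ n • (1 / ((n : ℝ) + 1))) := by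
    have summable_norm :
        Summable fun n : ℕ ↦ (1 : ℝ) ^ (n + 1) / (n + 1) * ‖1 / ((n : ℝ) + 1)‖ := by
      simpa [sq, abs_of_pos, Nat.cast_add_one_pos] using hasSum_one_div_nat_add_one_sq.summable
    simpa [sq] using hasSum_integral_tsum_pow_smul_s16 zero_le_one summable_norm
  rw [integral_congr_Ioo_of_le zero_le_one inner_eq]
  exact outer.unique hasSum_one_div_nat_add_one_sq
end
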